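/- arXiv:1901.09295 — 9 statements merged into one kernel-verified Lean document; each statement's English description precedes it below -/
import Mathlib

section
/- Let a < b and c < d be real numbers, let r : ℝ² → ℝ³ be twice continuously differentiable on an open neighborhood of [a,b] × [c,d], and let G : ℝ² → ℝ³ be continuously differentiable on that neighborhood. Then ∮_{∂([a,b]×[c,d])} (G · r_u) du + (G · r_v) dv = ∬_{[a,b]×[c,d]} (G_u · r_v − G_v · r_u) du dv. -/
open Real Set

noncomputable def dot3 (a b : Fin 3 → ℝ) : ℝ := a 0 * b 0 + a 1 * b 1 + a 2 * b 2

noncomputable def cross3 (a b : Fin 3 → ℝ) : Fin 3 → ℝ :=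
  ![a 1 * b 2 - a 2 * b 1, a 2 * b 0 - a 0 * b 2, a 0 * b 1 - a 1 * b 0]

noncomputable def pdu {E : Type*} [NormedAddCommGroup E] [NormedSpace ℝ E]
    (f : ℝ × ℝ → E) (p : ℝ × ℝ) : E := fderiv ℝ f p (1, 0)

noncomputable def pdv {E : Type*} [NormedAddCommGroup E] [NormedSpace ℝ E]
    (f : ℝ × ℝ → E) (p : ℝ × ℝ) : E := fderiv ℝ f p (0, 1)

noncomputable def curl3 (F : (Fin 3 → ℝ) → (Fin 3 → ℝ)) (q : Fin 3 → ℝ) : Fin 3 → ℝ :=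
  ![fderiv ℝ F q (Pi.single 1 1) 2 - fderiv ℝ F q (Pi.single 2 1) 1,
    fderiv ℝ F q (Pi.single 2 1) 0 - fderiv ℝ F q (Pi.single 0 1) 2,
    fderiv ℝ F q (Pi.single 0 1) 1 - fderiv ℝ F q (Pi.single 1 1) 0]

noncomputable def lineInt (P Q : ℝ × ℝ → ℝ) (a b c d : ℝ) : ℝ :=
  (∫ u in a..b, P (u, c)) + (∫ v in c..d, Q (b, v))
    - (∫ u in a..b, P (u, d)) - (∫ v in c..d, Q (a, v))

noncomputable def mob (p : ℝ × ℝ) : Fin 3 → ℝ :=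
  ![(1 + p.2 * Real.cos (p.1 / 2)) * Real.cos p.1,
    (1 + p.2 * Real.cos (p.1 / 2)) * Real.sin p.1,
    p.2 * Real.sin (p.1 / 2)]

noncomputable def rhat (δ : ℝ) (p : ℝ × ℝ) : Fin 3 → ℝ :=
  (1 - p.2) • mob (p.1, δ) + p.2 • mob (2 * π - p.1, δ)

/-!
The claim is Green's theorem for the 1-form `G · dr = (G · r_u) du + (G · r_v) dv`. By the product
rule its curl is `(G_u · r_v + G · r_vu) - (G_v · r_u + G · r_uv)`, where the second derivatives of
`r` cancel by symmetry. The same computation works for every continuous bilinear pairing.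
-/

section PartialDerivatives

variable {E F H : Type*} [NormedAddCommGroup E] [NormedSpace ℝ E] [NormedAddCommGroup F]
  [NormedSpace ℝ F] [NormedAddCommGroup H] [NormedSpace ℝ H]

theorem contDiffOn_pdu {f : ℝ × ℝ → E} {U : Set (ℝ × ℝ)} {m n : WithTop ℕ∞} (hU : IsOpen U)
    (hf : ContDiffOn ℝ n f U) (hmn : m + 1 ≤ n) : ContDiffOn ℝ m (pdu f) U :=
  (hf.fderiv_of_isOpen hU hmn).clm_apply contDiffOn_const

theorem contDiffOn_pdv {f : ℝ × ℝ → E} {U : Set (ℝ × ℝ)} {m n : WithTop ℕ∞} (hU : IsOpen U)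
    (hf : ContDiffOn ℝ n f U) (hmn : m + 1 ≤ n) : ContDiffOn ℝ m (pdv f) U :=
  (hf.fderiv_of_isOpen hU hmn).clm_apply contDiffOn_const

theorem pdu_bilinear (B : E →L[ℝ] F →L[ℝ] H) {f : ℝ × ℝ → E} {g : ℝ × ℝ → F} {p : ℝ × ℝ}
    (hf : DifferentiableAt ℝ f p) (hg : DifferentiableAt ℝ g p) :
    pdu (fun q => B (f q) (g q)) p = B (pdu f p) (g p) + B (f p) (pdu g p) := by
  rw [pdu, B.fderiv_of_bilinear hf hg]
  exact add_comm _ _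

theorem pdv_bilinear (B : E →L[ℝ] F →L[ℝ] H) {f : ℝ × ℝ → E} {g : ℝ × ℝ → F} {p : ℝ × ℝ}
    (hf : DifferentiableAt ℝ f p) (hg : DifferentiableAt ℝ g p) :
    pdv (fun q => B (f q) (g q)) p = B (pdv f p) (g p) + B (f p) (pdv g p) := by
  rw [pdv, B.fderiv_of_bilinear hf hg]
  exact add_comm _ _

theorem differentiableAt_fderiv {f : E → F} {x : E} (hf : ContDiffAt ℝ 2 f x) :
    DifferentiableAt ℝ (fderiv ℝ f) x :=
  (hf.fderiv_right (m := 1) (by norm_num)).differentiableAt one_ne_zero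

theorem pdu_pdv_comm {f : ℝ × ℝ → E} {p : ℝ × ℝ} (hf : ContDiffAt ℝ 2 f p) :
    pdu (pdv f) p = pdv (pdu f) p := by
  have fderiv_fderiv_apply (w z : ℝ × ℝ) :
      fderiv ℝ (fun q => fderiv ℝ f q z) p w = fderiv ℝ (fderiv ℝ f) p w z := by
    rw [fderiv_clm_apply (differentiableAt_fderiv hf) (differentiableAt_const z)]
    simp
  calc pdu (pdv f) p = fderiv ℝ (fderiv ℝ f) p (1, 0) (0, 1) := fderiv_fderiv_apply _ _
    _ = fderiv ℝ (fderiv ℝ f) p (0, 1) (1, 0) := hf.isSymmSndFDerivAt (by simp) _ _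
    _ = pdv (pdu f) p := (fderiv_fderiv_apply _ _).symm

theorem pdu_bilinear_pdv_sub_pdv_bilinear_pdu (B : E →L[ℝ] F →L[ℝ] H) {G : ℝ × ℝ → E}
    {r : ℝ × ℝ → F} {p : ℝ × ℝ} (hG : DifferentiableAt ℝ G p) (hr : ContDiffAt ℝ 2 r p) :
    pdu (fun q => B (G q) (pdv r q)) p - pdv (fun q => B (G q) (pdu r q)) p
      = B (pdu G p) (pdv r p) - B (pdv G p) (pdu r p) := by
  have hru : DifferentiableAt ℝ (pdu r) p :=
    (differentiableAt_fderiv hr).clm_apply (differentiableAt_const _)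
  have hrv : DifferentiableAt ℝ (pdv r) p :=
    (differentiableAt_fderiv hr).clm_apply (differentiableAt_const _)
  rw [pdu_bilinear B hG hrv, pdv_bilinear B hG hru, pdu_pdv_comm hr, add_sub_add_right_eq_sub]

end PartialDerivatives

theorem lineInt_eq_setIntegral_pdu_sub_pdv {a b c d : ℝ} (hab : a ≤ b) (hcd : c ≤ d)
    {U : Set (ℝ × ℝ)} (hU : IsOpen U) (hDU : Icc a b ×ˢ Icc c d ⊆ U) {P Q : ℝ × ℝ → ℝ}
    (hP : ContDiffOn ℝ 1 P U) (hQ : ContDiffOn ℝ 1 Q U) :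
    lineInt P Q a b c d = ∫ p in Icc a b ×ˢ Icc c d, (pdu Q p - pdv P p) := by
  have hIoo : Ioo a b ×ˢ Ioo c d ⊆ U :=
    (prod_mono Ioo_subset_Icc_self Ioo_subset_Icc_self).trans hDU
  have hasFDerivAt_of_mem {f : ℝ × ℝ → ℝ} (hf : ContDiffOn ℝ 1 f U) :
      ∀ p ∈ Ioo a b ×ˢ Ioo c d, HasFDerivAt f (fderiv ℝ f p) p := fun p hp =>
    ((hf.differentiableOn one_ne_zero).differentiableAt (hU.mem_nhds (hIoo hp))).hasFDerivAt
  have hcurl : ContinuousOn (fun p => pdu Q p - pdv P p) (Icc a b ×ˢ Icc c d) :=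
    ((contDiffOn_pdu (m := 0) hU hQ (by norm_num)).continuousOn.sub
      (contDiffOn_pdv (m := 0) hU hP (by norm_num)).continuousOn).mono hDU
  rw [Icc_prod_Icc] at hDU hcurl ⊢
  have divergence := MeasureTheory.integral_divergence_prod_Icc_of_hasFDerivAt_of_le
    Q (-P) (fderiv ℝ Q) (-fderiv ℝ P) (a, c) (b, d) ⟨hab, hcd⟩
    (hQ.continuousOn.mono hDU) (hP.continuousOn.neg.mono hDU)
    (hasFDerivAt_of_mem hQ) (fun p hp => (hasFDerivAt_of_mem hP p hp).neg)
    (by simpa only [pdu, pdv, sub_eq_add_neg, Pi.neg_apply, neg_apply]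
      using hcurl.integrableOn_compact isCompact_Icc)
  simp only [Pi.neg_apply, neg_apply, ← sub_eq_add_neg,
    intervalIntegral.integral_neg] at divergence
  simp only [pdu, pdv, lineInt, divergence]
  ring

theorem stmt1_general {E F : Type*} [NormedAddCommGroup E] [NormedSpace ℝ E]
    [NormedAddCommGroup F] [NormedSpace ℝ F] (B : E →L[ℝ] F →L[ℝ] ℝ) {a b c d : ℝ}
    (hab : a ≤ b) (hcd : c ≤ d) {U : Set (ℝ × ℝ)} (hU : IsOpen U)
    (hDU : Icc a b ×ˢ Icc c d ⊆ U) {r : ℝ × ℝ → F} {G : ℝ × ℝ → E}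
    (hr : ContDiffOn ℝ 2 r U) (hG : ContDiffOn ℝ 1 G U) :
    lineInt (fun p => B (G p) (pdu r p)) (fun p => B (G p) (pdv r p)) a b c d
      = ∫ p in Icc a b ×ˢ Icc c d, (B (pdu G p) (pdv r p) - B (pdv G p) (pdu r p)) := by
  have hBG : ContDiffOn ℝ 1 (fun p => B (G p)) U := B.contDiff.comp_contDiffOn hG
  have hru : ContDiffOn ℝ 1 (pdu r) U := contDiffOn_pdu hU hr (by norm_num)
  have hrv : ContDiffOn ℝ 1 (pdv r) U := contDiffOn_pdv hU hr (by norm_num)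
  rw [lineInt_eq_setIntegral_pdu_sub_pdv hab hcd hU hDU (hBG.clm_apply hru) (hBG.clm_apply hrv)]
  refine MeasureTheory.setIntegral_congr_fun (measurableSet_Icc.prod measurableSet_Icc) ?_
  intro p hp
  have hpU : U ∈ nhds p := hU.mem_nhds (hDU hp)
  exact pdu_bilinear_pdv_sub_pdv_bilinear_pdu B
    ((hG.contDiffAt hpU).differentiableAt one_ne_zero) (hr.contDiffAt hpU)

/-- The dot product `dot3` as a continuous bilinear map, so that the calculus of bilinear maps
applies to it. -/
noncomputable def dot3Bilin : (Fin 3 → ℝ) →L[ℝ] (Fin 3 → ℝ) →L[ℝ] ℝ :=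
  (dotProductBilin ℝ ℝ).toContinuousBilinearMap

theorem dot3Bilin_apply (x y : Fin 3 → ℝ) : dot3Bilin x y = dot3 x y := by
  simp [dot3Bilin, dot3, dotProduct, Fin.sum_univ_three]

theorem stmt1 (a b c d : ℝ) (hab : a < b) (hcd : c < d)
    (U : Set (ℝ × ℝ)) (hU : IsOpen U) (hDU : (Set.Icc a b) ×ˢ (Set.Icc c d) ⊆ U)
    (r G : ℝ × ℝ → Fin 3 → ℝ)
    (hr : ContDiffOn ℝ 2 r U) (hG : ContDiffOn ℝ 1 G U) :
    lineInt (fun p => dot3 (G p) (pdu r p)) (fun p => dot3 (G p) (pdv r p)) a b c d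
      = ∫ p in (Set.Icc a b) ×ˢ (Set.Icc c d),
          (dot3 (pdu G p) (pdv r p) - dot3 (pdv G p) (pdu r p)) := by
  simpa only [dot3Bilin_apply] using stmt1_general dot3Bilin hab.le hcd.le hU hDU hr hG
end

section
/- Let r : ℝ² → ℝ³ be differentiable at a point p = (u,v), let F : ℝ³ → ℝ³ be differentiable at r(p), and set G = F ∘ r. Then (∇ × F)(r(p)) · (r_u(p) × r_v(p)) = G_u(p) · r_v(p) − G_v(p) · r_u(p), where × is the cross product in ℝ³ and · the Euclidean inner product. -/
open Real Set

/-!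
The curl is the axial vector `ω` of the Jacobian `M` of `F` at `r p`, that is, `ω × a = (M - Mᵀ) a`.
Permuting the triple product gives `ω · (a × b) = b · (ω × a) = M a · b - M b · a`, and for
`a = r_u`, `b = r_v` the chain rule identifies `M a` and `M b` with `G_u` and `G_v`.
-/

open Matrix

section AxialVector

variable {R : Type*} [CommRing R]

/-- The axial vector of a `3 × 3` matrix: the vector whose cross product action is the
skew-symmetric matrix `M - Mᵀ` (without the factor `1 / 2` used by some authors). It expresses the
curl of a vector field in terms of its Jacobian matrix. -/
def axialVector (M : Matrix (Fin 3) (Fin 3) R) : Fin 3 → R :=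
  ![M 2 1 - M 1 2, M 0 2 - M 2 0, M 1 0 - M 0 1]

theorem axialVector_cross (M : Matrix (Fin 3) (Fin 3) R) (a : Fin 3 → R) :
    axialVector M ⨯₃ a = (M - Mᵀ) *ᵥ a := by
  ext i
  fin_cases i <;>
    simp [axialVector, cross_apply, mulVec, dotProduct, Fin.sum_univ_three] <;> ring

theorem axialVector_dot_cross (M : Matrix (Fin 3) (Fin 3) R) (a b : Fin 3 → R) :
    axialVector M ⬝ᵥ a ⨯₃ b = M *ᵥ a ⬝ᵥ b - M *ᵥ b ⬝ᵥ a :=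
  calc
    axialVector M ⬝ᵥ a ⨯₃ b = b ⬝ᵥ axialVector M ⨯₃ a :=
      (triple_product_permutation b (axialVector M) a).symm
    _ = b ⬝ᵥ M *ᵥ a - b ⬝ᵥ Mᵀ *ᵥ a := by
      rw [axialVector_cross, sub_mulVec, dotProduct_sub]
    _ = M *ᵥ a ⬝ᵥ b - M *ᵥ b ⬝ᵥ a := by
      rw [dotProduct_comm b, dotProduct_mulVec b, vecMul_transpose]

end AxialVector

theorem dot3_eq_dotProduct (a b : Fin 3 → ℝ) : dot3 a b = a ⬝ᵥ b :=
  (vec3_dotProduct a b).symm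

theorem cross3_eq_crossProduct (a b : Fin 3 → ℝ) : cross3 a b = a ⨯₃ b :=
  (cross_apply a b).symm

theorem curl3_eq_axialVector (F : (Fin 3 → ℝ) → (Fin 3 → ℝ)) (q : Fin 3 → ℝ) :
    curl3 F q = axialVector (LinearMap.toMatrix' (fderiv ℝ F q).toLinearMap) := by
  simp [curl3, axialVector, LinearMap.toMatrix'_apply]

theorem dot3_curl3_cross3 (F : (Fin 3 → ℝ) → (Fin 3 → ℝ)) (q a b : Fin 3 → ℝ) :
    dot3 (curl3 F q) (cross3 a b) = dot3 (fderiv ℝ F q a) b - dot3 (fderiv ℝ F q b) a := by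
  simp only [dot3_eq_dotProduct, cross3_eq_crossProduct, curl3_eq_axialVector,
    axialVector_dot_cross, LinearMap.toMatrix'_mulVec, ContinuousLinearMap.coe_coe]

section ChainRule

variable {E E' : Type*} [NormedAddCommGroup E] [NormedSpace ℝ E]
  [NormedAddCommGroup E'] [NormedSpace ℝ E'] {f : E → E'} {r : ℝ × ℝ → E} {p : ℝ × ℝ}

theorem pdu_comp (hf : DifferentiableAt ℝ f (r p)) (hr : DifferentiableAt ℝ r p) :
    pdu (f ∘ r) p = fderiv ℝ f (r p) (pdu r p) :=
  DFunLike.congr_fun (fderiv_comp p hf hr) (1, 0)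

theorem pdv_comp (hf : DifferentiableAt ℝ f (r p)) (hr : DifferentiableAt ℝ r p) :
    pdv (f ∘ r) p = fderiv ℝ f (r p) (pdv r p) :=
  DFunLike.congr_fun (fderiv_comp p hf hr) (0, 1)

end ChainRule

theorem stmt2 (r : ℝ × ℝ → Fin 3 → ℝ) (F : (Fin 3 → ℝ) → (Fin 3 → ℝ))
    (p : ℝ × ℝ) (hr : DifferentiableAt ℝ r p) (hF : DifferentiableAt ℝ F (r p))
    (G : ℝ × ℝ → Fin 3 → ℝ) (hG : G = F ∘ r) :
    dot3 (curl3 F (r p)) (cross3 (pdu r p) (pdv r p))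
      = dot3 (pdu G p) (pdv r p) - dot3 (pdv G p) (pdu r p) := by
  rw [hG, pdu_comp hF hr, pdv_comp hF hr, dot3_curl3_cross3]
end

section
/- Let a < b and c < d be real numbers, let r : ℝ² → ℝ³ be twice continuously differentiable on an open neighborhood of the rectangle [a,b] × [c,d], and let F : ℝ³ → ℝ³ be continuously differentiable on an open neighborhood of the image r([a,b] × [c,d]). Set G = F ∘ r. Then ∮_{∂([a,b]×[c,d])} (G · r_u) du + (G · r_v) dv = ∬_{[a,b]×[c,d]} (∇ × F)(r(u,v)) · (r_u(u,v) × r_v(u,v)) du dv. -/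
open Real Set

/-!
The form `G · r_u du + G · r_v dv` is the pullback along `r` of the work form
`F₀ dx + F₁ dy + F₂ dz`. Green's theorem turns its boundary integral into the integral of its
exterior derivative over the rectangle; since `d` commutes with pullback (this is where the symmetry
of the second derivative of `r` enters), that derivative is the pullback of the exterior derivative
of the work form, which is `(v, w) ↦ (∇ × F) · (v × w)`.
-/

section DifferentialForm

variable {𝕜 E G : Type*} [NontriviallyNormedField 𝕜] [NormedAddCommGroup E] [NormedSpace 𝕜 E]
  [NormedAddCommGroup G] [NormedSpace 𝕜 G]

theorem extDeriv_oneForm_apply (ω : E → E [⋀^Fin 1]→L[𝕜] G) (x v w : E) :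
    extDeriv ω x ![v, w] = fderiv 𝕜 ω x v ![w] - fderiv 𝕜 ω x w ![v] := by
  have remove_zero : (0 : Fin 2).removeNth ![v, w] = ![w] := by ext i; fin_cases i; rfl
  have remove_one : (1 : Fin 2).removeNth ![v, w] = ![v] := by ext i; fin_cases i; rfl
  simp [extDeriv, ContinuousAlternatingMap.alternatizeUncurryFin_apply, Fin.sum_univ_two,
    remove_zero, remove_one, sub_eq_add_neg]

theorem continuousOn_extDeriv_of_isOpen {n : ℕ} {ω : E → E [⋀^Fin n]→L[𝕜] G} {s : Set E}
    (hω : ContDiffOn 𝕜 1 ω s) (hs : IsOpen s) : ContinuousOn (extDeriv ω) s :=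
  (ContinuousAlternatingMap.alternatizeUncurryFinCLM 𝕜 E G).continuous.comp_continuousOn
    (hω.continuousOn_fderiv_of_isOpen hs le_rfl)

variable {X : Type*} [NormedAddCommGroup X] [NormedSpace 𝕜 X] {n : ℕ}

/-- The pullback `f^* ω` of an `n`-form `ω` along `f`, given by
`(f^* ω)_x (v₁, …, vₙ) = ω_{f x} (df_x v₁, …, df_x vₙ)`, in the form in which Mathlib's
`extDeriv_pullback` is stated. -/
noncomputable def pullbackForm (f : X → E) (ω : E → E [⋀^Fin n]→L[𝕜] G) (x : X) :
    X [⋀^Fin n]→L[𝕜] G :=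
  (ω (f x)).compContinuousLinearMap (fderiv 𝕜 f x)

theorem pullbackForm_apply_singleton (f : X → E) (ω : E → E [⋀^Fin 1]→L[𝕜] G) (x v : X) :
    pullbackForm f ω x ![v] = ω (f x) ![fderiv 𝕜 f x v] :=
  congrArg (ω (f x)) (FinVec.map_eq (fderiv 𝕜 f x) ![v]).symm

-- `Fin (1 + 1)` rather than `Fin 2`, to match syntactically the type of `extDeriv` of a 1-form.
theorem pullbackForm_apply_pair (f : X → E) (ω : E → E [⋀^Fin (1 + 1)]→L[𝕜] G) (x v w : X) :
    pullbackForm f ω x ![v, w] = ω (f x) ![fderiv 𝕜 f x v, fderiv 𝕜 f x w] :=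
  congrArg (ω (f x)) (FinVec.map_eq (fderiv 𝕜 f x) ![v, w]).symm

theorem continuousOn_pullbackForm {f : X → E} {ω : E → E [⋀^Fin n]→L[𝕜] G} {s : Set X} {t : Set E}
    (hω : ContinuousOn ω t) (hf : ContDiffOn 𝕜 1 f s) (hs : IsOpen s) :
    ContinuousOn (pullbackForm f ω) (s ∩ f ⁻¹' t) := by
  have continuous_comp : ContinuousOn (fun x ↦ ω (f x)) (s ∩ f ⁻¹' t) :=
    hω.comp (hf.continuousOn.mono inter_subset_left) fun _ hx ↦ hx.2
  have continuous_fderiv : ContinuousOn (fderiv 𝕜 f) (s ∩ f ⁻¹' t) :=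
    (hf.continuousOn_fderiv_of_isOpen hs le_rfl).mono inter_subset_left
  exact (ContinuousAlternatingMap.continuous_compContinuousLinearMapCLM.comp_continuousOn
    continuous_fderiv).clm_apply continuous_comp

theorem differentiableAt_pullbackForm {f : X → E} {ω : E → E [⋀^Fin n]→L[𝕜] G} {x : X}
    (hω : DifferentiableAt 𝕜 ω (f x)) (hf : ContDiffAt 𝕜 2 f x) :
    DifferentiableAt 𝕜 (pullbackForm f ω) x :=
  (hω.comp x (hf.differentiableAt two_ne_zero)).continuousAlternatingMapCompContinuousLinearMap
    ((hf.fderiv_right (m := 1) one_add_one_eq_two.le).differentiableAt one_ne_zero)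

theorem extDeriv_pullbackForm {f : X → E} {ω : E → E [⋀^Fin n]→L[𝕜] G} {x : X} {m : WithTop ℕ∞}
    (hω : DifferentiableAt 𝕜 ω (f x)) (hf : ContDiffAt 𝕜 m f x) (hm : minSmoothness 𝕜 2 ≤ m) :
    extDeriv (pullbackForm f ω) x = pullbackForm f (extDeriv ω) x :=
  extDeriv_pullback hω hf hm

end DifferentialForm

section Stokes

open MeasureTheory

variable {a b c d : ℝ}

theorem lineInt_eq_setIntegral_pdu_sub_pdv_s3 {P Q : ℝ × ℝ → ℝ} (hab : a ≤ b) (hcd : c ≤ d)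
    (hPc : ContinuousOn P (Icc a b ×ˢ Icc c d)) (hQc : ContinuousOn Q (Icc a b ×ˢ Icc c d))
    (hPd : ∀ p ∈ Ioo a b ×ˢ Ioo c d, DifferentiableAt ℝ P p)
    (hQd : ∀ p ∈ Ioo a b ×ˢ Ioo c d, DifferentiableAt ℝ Q p)
    (hint : IntegrableOn (fun p ↦ pdu Q p - pdv P p) (Icc a b ×ˢ Icc c d)) :
    lineInt P Q a b c d = ∫ p in Icc a b ×ˢ Icc c d, pdu Q p - pdv P p := by
  have divergence := integral_divergence_prod_Icc_of_hasFDerivAt_of_le Q (-P)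
    (fderiv ℝ Q) (fun p ↦ -fderiv ℝ P p) (a, c) (b, d) ⟨hab, hcd⟩
  simp only [← Icc_prod_Icc, neg_apply, ← sub_eq_add_neg, Pi.neg_apply,
    intervalIntegral.integral_neg] at divergence
  have green := divergence hQc hPc.neg (fun p hp ↦ (hQd p hp).hasFDerivAt)
    (fun p hp ↦ (hPd p hp).hasFDerivAt.neg) hint
  simp only [pdu, pdv, lineInt, green]
  ring

theorem lineInt_oneForm_eq_setIntegral_extDeriv {η : ℝ × ℝ → (ℝ × ℝ) [⋀^Fin 1]→L[ℝ] ℝ}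
    (hab : a ≤ b) (hcd : c ≤ d) (hη : ∀ p ∈ Icc a b ×ˢ Icc c d, DifferentiableAt ℝ η p)
    (hint : IntegrableOn (fun p ↦ extDeriv η p ![(1, 0), (0, 1)]) (Icc a b ×ˢ Icc c d)) :
    lineInt (fun p ↦ η p ![(1, 0)]) (fun p ↦ η p ![(0, 1)]) a b c d
      = ∫ p in Icc a b ×ˢ Icc c d, extDeriv η p ![(1, 0), (0, 1)] := by
  have measurable_rect : MeasurableSet (Icc a b ×ˢ Icc c d) :=
    measurableSet_Icc.prod measurableSet_Icc
  have differentiable_coeff (w : ℝ × ℝ) :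
      ∀ p ∈ Icc a b ×ˢ Icc c d, DifferentiableAt ℝ (fun p ↦ η p ![w]) p :=
    fun p hp ↦ (hη p hp).continuousAlternatingMap_apply_const _
  have continuous_coeff (w : ℝ × ℝ) :
      ContinuousOn (fun p ↦ η p ![w]) (Icc a b ×ˢ Icc c d) :=
    fun p hp ↦ (differentiable_coeff w p hp).continuousAt.continuousWithinAt
  have extDeriv_eq : EqOn (fun p ↦ extDeriv η p ![(1, 0), (0, 1)])
      (fun p ↦ pdu (fun q ↦ η q ![(0, 1)]) p - pdv (fun q ↦ η q ![(1, 0)]) p)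
      (Icc a b ×ˢ Icc c d) := fun p hp ↦ by
    simp only [pdu, pdv, extDeriv_oneForm_apply,
      fderiv_continuousAlternatingMap_apply_const_apply (hη p hp)]
  have interior_subset : Ioo a b ×ˢ Ioo c d ⊆ Icc a b ×ˢ Icc c d :=
    prod_mono Ioo_subset_Icc_self Ioo_subset_Icc_self
  rw [setIntegral_congr_fun measurable_rect extDeriv_eq]
  exact lineInt_eq_setIntegral_pdu_sub_pdv_s3 hab hcd (continuous_coeff _) (continuous_coeff _)
    (fun p hp ↦ differentiable_coeff _ p (interior_subset hp))
    (fun p hp ↦ differentiable_coeff _ p (interior_subset hp))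
    (hint.congr_fun extDeriv_eq measurable_rect)

variable {E : Type*} [NormedAddCommGroup E] [NormedSpace ℝ E]

theorem lineInt_pullbackForm_eq_setIntegral_extDeriv {U : Set (ℝ × ℝ)} {V : Set E} {r : ℝ × ℝ → E}
    {ω : E → E [⋀^Fin 1]→L[ℝ] ℝ} (hab : a ≤ b) (hcd : c ≤ d)
    (hU : IsOpen U) (hrectU : Icc a b ×ˢ Icc c d ⊆ U) (hr : ContDiffOn ℝ 2 r U)
    (hV : IsOpen V) (hrectV : MapsTo r (Icc a b ×ˢ Icc c d) V) (hω : ContDiffOn ℝ 1 ω V) :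
    lineInt (fun p ↦ ω (r p) ![pdu r p]) (fun p ↦ ω (r p) ![pdv r p]) a b c d
      = ∫ p in Icc a b ×ˢ Icc c d, extDeriv ω (r p) ![pdu r p, pdv r p] := by
  have contDiffAt_r (p) (hp : p ∈ Icc a b ×ˢ Icc c d) : ContDiffAt ℝ 2 r p :=
    hr.contDiffAt (hU.mem_nhds (hrectU hp))
  have differentiable_ω (p) (hp : p ∈ Icc a b ×ˢ Icc c d) : DifferentiableAt ℝ ω (r p) :=
    (hω.contDiffAt (hV.mem_nhds (hrectV hp))).differentiableAt one_ne_zero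
  have extDeriv_eq : EqOn (extDeriv (pullbackForm r ω)) (pullbackForm r (extDeriv ω))
      (Icc a b ×ˢ Icc c d) :=
    fun p hp ↦ extDeriv_pullbackForm (differentiable_ω p hp) (contDiffAt_r p hp) (by simp)
  have continuous_extDeriv :
      ContinuousOn (extDeriv (pullbackForm r ω)) (Icc a b ×ˢ Icc c d) :=
    ((continuousOn_pullbackForm (continuousOn_extDeriv_of_isOpen hω hV) (hr.of_le one_le_two)
      hU).mono (subset_inter hrectU hrectV)).congr extDeriv_eq
  calc
    lineInt (fun p ↦ ω (r p) ![pdu r p]) (fun p ↦ ω (r p) ![pdv r p]) a b c d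
    _ = lineInt (fun p ↦ pullbackForm r ω p ![(1, 0)])
          (fun p ↦ pullbackForm r ω p ![(0, 1)]) a b c d := by
      simp only [pullbackForm_apply_singleton, pdu, pdv]
    _ = ∫ p in Icc a b ×ˢ Icc c d, extDeriv (pullbackForm r ω) p ![(1, 0), (0, 1)] :=
      lineInt_oneForm_eq_setIntegral_extDeriv hab hcd
        (fun p hp ↦ differentiableAt_pullbackForm (differentiable_ω p hp) (contDiffAt_r p hp))
        ((continuous_extDeriv.eval_const _).integrableOn_compact
          (isCompact_Icc.prod isCompact_Icc))
    _ = ∫ p in Icc a b ×ˢ Icc c d, extDeriv ω (r p) ![pdu r p, pdv r p] :=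
      setIntegral_congr_fun (measurableSet_Icc.prod measurableSet_Icc) fun p hp ↦ by
        simp only [extDeriv_eq hp, pullbackForm_apply_pair, pdu, pdv]

end Stokes

section WorkForm

/-- The covector `a₀ dx + a₁ dy + a₂ dz`, i.e. `b ↦ dot3 a b`, as a continuous linear function of
`a`, so that `dot3Covector ∘ F` is the work form of a vector field `F`. Covectors are alternating
maps on `Fin 1` so that `extDeriv` applies to fields of them. -/
noncomputable def dot3Covector : (Fin 3 → ℝ) →L[ℝ] (Fin 3 → ℝ) [⋀^Fin 1]→L[ℝ] ℝ :=
  ∑ i, (ContinuousLinearMap.proj i).smulRight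
    (ContinuousAlternatingMap.ofSubsingleton ℝ (Fin 3 → ℝ) ℝ 0 (ContinuousLinearMap.proj i))

theorem dot3Covector_apply (a b : Fin 3 → ℝ) : dot3Covector a ![b] = dot3 a b := by
  simp [dot3Covector, dot3, Fin.sum_univ_three]

theorem dot3_fderiv_sub_dot3_fderiv (F : (Fin 3 → ℝ) → Fin 3 → ℝ) (q v w : Fin 3 → ℝ) :
    dot3 (fderiv ℝ F q v) w - dot3 (fderiv ℝ F q w) v = dot3 (curl3 F q) (cross3 v w) := by
  have fderiv_expand (x : Fin 3 → ℝ) : fderiv ℝ F q x = x 0 • fderiv ℝ F q (Pi.single 0 1)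
      + x 1 • fderiv ℝ F q (Pi.single 1 1) + x 2 • fderiv ℝ F q (Pi.single 2 1) := by
    simpa [Fin.sum_univ_three] using congrArg (fderiv ℝ F q) (pi_eq_sum_univ' x)
  rw [fderiv_expand v, fderiv_expand w]
  simp only [dot3, cross3, curl3, Pi.add_apply, Pi.smul_apply, smul_eq_mul, Matrix.cons_val]
  ring

theorem extDeriv_dot3Covector_comp_apply {F : (Fin 3 → ℝ) → Fin 3 → ℝ} {q : Fin 3 → ℝ}
    (hF : DifferentiableAt ℝ F q) (v w : Fin 3 → ℝ) :
    extDeriv (dot3Covector ∘ F) q ![v, w] = dot3 (curl3 F q) (cross3 v w) := by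
  simp only [extDeriv_oneForm_apply, fderiv_comp q dot3Covector.differentiableAt hF,
    ContinuousLinearMap.fderiv, ContinuousLinearMap.comp_apply, dot3Covector_apply,
    dot3_fderiv_sub_dot3_fderiv]

end WorkForm

theorem stmt3 (a b c d : ℝ) (hab : a < b) (hcd : c < d)
    (U : Set (ℝ × ℝ)) (hU : IsOpen U) (hDU : (Set.Icc a b) ×ˢ (Set.Icc c d) ⊆ U)
    (r : ℝ × ℝ → Fin 3 → ℝ) (hr : ContDiffOn ℝ 2 r U)
    (V : Set (Fin 3 → ℝ)) (hV : IsOpen V)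
    (hSV : r '' ((Set.Icc a b) ×ˢ (Set.Icc c d)) ⊆ V)
    (F : (Fin 3 → ℝ) → (Fin 3 → ℝ)) (hF : ContDiffOn ℝ 1 F V)
    (G : ℝ × ℝ → Fin 3 → ℝ) (hG : G = F ∘ r) :
    lineInt (fun p => dot3 (G p) (pdu r p)) (fun p => dot3 (G p) (pdv r p)) a b c d
      = ∫ p in (Set.Icc a b) ×ˢ (Set.Icc c d),
          dot3 (curl3 F (r p)) (cross3 (pdu r p) (pdv r p)) := by
  subst hG
  have hrectV : MapsTo r (Icc a b ×ˢ Icc c d) V := mapsTo_iff_image_subset.2 hSV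
  have differentiable_F (p) (hp : p ∈ Icc a b ×ˢ Icc c d) : DifferentiableAt ℝ F (r p) :=
    (hF.contDiffAt (hV.mem_nhds (hrectV hp))).differentiableAt one_ne_zero
  calc
    lineInt (fun p ↦ dot3 ((F ∘ r) p) (pdu r p)) (fun p ↦ dot3 ((F ∘ r) p) (pdv r p)) a b c d
    _ = lineInt (fun p ↦ (dot3Covector ∘ F) (r p) ![pdu r p])
          (fun p ↦ (dot3Covector ∘ F) (r p) ![pdv r p]) a b c d := by
      simp only [Function.comp_apply, dot3Covector_apply]
    _ = ∫ p in Icc a b ×ˢ Icc c d, extDeriv (dot3Covector ∘ F) (r p) ![pdu r p, pdv r p] :=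
      lineInt_pullbackForm_eq_setIntegral_extDeriv hab.le hcd.le hU hDU hr hV hrectV
        (dot3Covector.contDiff.comp_contDiffOn hF)
    _ = ∫ p in Icc a b ×ˢ Icc c d, dot3 (curl3 F (r p)) (cross3 (pdu r p) (pdv r p)) :=
      MeasureTheory.setIntegral_congr_fun (measurableSet_Icc.prod measurableSet_Icc)
        fun p hp ↦ extDeriv_dot3Covector_comp_apply (differentiable_F p hp) _ _
end

section
/- For every real u with cos u ≠ 0, r(u, −2·cos(u/2)/cos u) = r(u+π, −2·sin(u/2)/cos u) = (−1, −tan u, −tan u). Moreover, if δ > 2 then there exists ε > 0 such that for all u with 0 < u < ε, the two parameter points (u, −2·cos(u/2)/cos u) and (u+π, −2·sin(u/2)/cos u) are distinct points of D_δ. -/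
open Real Set

/-!
When `cos u ≠ 0`, the ruling of the Möbius strip at angle `u` meets the plane `x = -1` in the point
`(-1, -tan u, -tan u)`. This point is `π`-periodic in `u`, so the rulings at `u` and `u + π` cross
there. On both rulings the crossing has `|v| ≤ 2 / |cos u|`, which tends to `2` as `u → 0`, so it
is seen by every strip of half-width greater than `2`.
-/

/-- The parameter `v` at which the ruling `v ↦ mob (u, v)` meets the plane `x = -1`. The quotient
`-(1 + cos u) / (cos u * cos (u / 2))` is simplified by the half-angle formula, so that it is also
meaningful at odd multiples `u` of `π`, where the whole ruling lies in the plane. It takes the junk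
value `0` when `cos u = 0`, where the ruling does not meet the plane. -/
noncomputable def planeParam (u : ℝ) : ℝ := -2 * cos (u / 2) / cos u

theorem planeParam_add_pi (u : ℝ) : planeParam (u + π) = -2 * sin (u / 2) / cos u := by
  rw [planeParam, add_div, cos_add_pi_div_two, cos_add_pi, mul_neg, neg_div_neg_eq]

theorem one_add_planeParam_mul_cos_half {u : ℝ} (hu : cos u ≠ 0) :
    1 + planeParam u * cos (u / 2) = -1 / cos u := by
  have half_angle : cos (u / 2) ^ 2 = 1 / 2 + cos u / 2 := by
    rw [cos_sq, mul_div_cancel₀ u two_ne_zero]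
  rw [planeParam]
  field_simp
  linarith

theorem planeParam_mul_sin_half (u : ℝ) : planeParam u * sin (u / 2) = -tan u := by
  have half_angle : sin u = 2 * sin (u / 2) * cos (u / 2) := by
    rw [← sin_two_mul, mul_div_cancel₀ u two_ne_zero]
  rw [planeParam, tan_eq_sin_div_cos, half_angle]
  ring

theorem mob_planeParam {u : ℝ} (hu : cos u ≠ 0) :
    mob (u, planeParam u) = ![-1, -tan u, -tan u] := by
  rw [mob, one_add_planeParam_mul_cos_half hu, planeParam_mul_sin_half, div_mul_cancel₀ _ hu,
    div_mul_eq_mul_div, neg_one_mul, neg_div, ← tan_eq_sin_div_cos]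

theorem mob_planeParam_add_pi {u : ℝ} (hu : cos u ≠ 0) :
    mob (u + π, planeParam (u + π)) = mob (u, planeParam u) := by
  have hu_add_pi : cos (u + π) ≠ 0 := by rwa [cos_add_pi, neg_ne_zero]
  rw [mob_planeParam hu, mob_planeParam hu_add_pi, tan_add_pi]

theorem abs_planeParam_le (u : ℝ) : |planeParam u| ≤ 2 / |cos u| := by
  rw [planeParam, abs_div, abs_mul, abs_neg, abs_two]
  gcongr
  exact mul_le_of_le_one_right zero_le_two (abs_cos_le_one _)

theorem mk_planeParam_mem_prod {s : Set ℝ} {u δ : ℝ} (hu : u ∈ s) (hδ : 2 / |cos u| ≤ δ) :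
    (u, planeParam u) ∈ s ×ˢ Icc (-δ) δ :=
  ⟨hu, abs_le.1 ((abs_planeParam_le u).trans hδ)⟩

theorem eventually_div_abs_cos_lt {c δ : ℝ} (h : c < δ) :
    ∀ᶠ u in nhds (0 : ℝ), c / |cos u| < δ := by
  have continuousAt_zero : ContinuousAt (fun u ↦ c / |cos u|) 0 :=
    continuousAt_const.div continuous_cos.abs.continuousAt (by simp)
  exact continuousAt_zero.eventually_lt_const (by simpa using h)

theorem stmt5 :
    (∀ u : ℝ, Real.cos u ≠ 0 →
      mob (u, -2 * Real.cos (u / 2) / Real.cos u)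
          = mob (u + π, -2 * Real.sin (u / 2) / Real.cos u) ∧
      mob (u, -2 * Real.cos (u / 2) / Real.cos u) = ![-1, -Real.tan u, -Real.tan u]) ∧
    ∀ δ : ℝ, 2 < δ → ∃ ε > (0 : ℝ), ∀ u : ℝ, 0 < u → u < ε →
      (u, -2 * Real.cos (u / 2) / Real.cos u)
        ∈ (Set.Icc (0 : ℝ) (2 * π)) ×ˢ (Set.Icc (-δ) δ) ∧
      (u + π, -2 * Real.sin (u / 2) / Real.cos u)
        ∈ (Set.Icc (0 : ℝ) (2 * π)) ×ˢ (Set.Icc (-δ) δ) ∧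
      (u, -2 * Real.cos (u / 2) / Real.cos u)
        ≠ (u + π, -2 * Real.sin (u / 2) / Real.cos u) := by
  refine ⟨fun u hu ↦ ?_, fun δ hδ ↦ ?_⟩
  · rw [← planeParam_add_pi]
    exact ⟨(mob_planeParam_add_pi hu).symm, mob_planeParam hu⟩
  · obtain ⟨ρ, hρ, two_div_lt⟩ := Metric.eventually_nhds_iff.1 (eventually_div_abs_cos_lt hδ)
    refine ⟨min ρ π, lt_min hρ pi_pos, fun u hu_pos hu_lt ↦ ?_⟩
    obtain ⟨hu_lt_rho, hu_lt_pi⟩ := lt_min_iff.1 hu_lt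
    have hδu : 2 / |cos u| ≤ δ :=
      (two_div_lt (by rwa [dist_zero_right, norm_of_nonneg hu_pos.le])).le
    have hδu_add_pi : 2 / |cos (u + π)| ≤ δ := by rwa [cos_add_pi, abs_neg]
    rw [← planeParam_add_pi]
    refine ⟨mk_planeParam_mem_prod ⟨hu_pos.le, by linarith⟩ hδu,
      mk_planeParam_mem_prod ⟨by linarith, by linarith⟩ hδu_add_pi, fun h ↦ ?_⟩
    exact (lt_add_of_pos_right u pi_pos).ne (congrArg Prod.fst h)
end

section
/- For every real u with cos u ≠ 0, r(2π−u, 2·cos(u/2)/cos u) = r(π−u, 2·sin(u/2)/cos u) = (−1, tan u, tan u). Moreover, if δ > 2 then there exists ε > 0 such that for all u with 0 < u < ε, the two parameter points (2π−u, 2·cos(u/2)/cos u) and (π−u, 2·sin(u/2)/cos u) are distinct points of D_δ. -/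
open Real Set

/-!
The curve `u ↦ (2π - u, 2 cos (u/2) / cos u)` is mapped by `mob` onto the line `{(-1, t, t)}` with
`t = tan u`. Replacing `u` by `u + π` turns its point into `(π - u, 2 sin (u/2) / cos u)` and leaves
`tan u` unchanged, so `mob` identifies the two. As `u ↓ 0` their `v`-coordinates tend to `2` and
`0`, so for `2 < δ` both points lie in the parameter rectangle once `u` is small.
-/

open Filter Topology

/-- The parameter point `(2π - u, 2 cos (u/2) / cos u)`, which `mob` maps to the point
`(-1, tan u, tan u)` of a diagonal line. Where `cos u = 0` its second coordinate is the
junk value `0`. -/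
noncomputable def diagonalLift (u : ℝ) : ℝ × ℝ :=
  (2 * π - u, 2 * cos (u / 2) / cos u)

lemma diagonalLift_add_pi (u : ℝ) :
    diagonalLift (u + π) = (π - u, 2 * sin (u / 2) / cos u) := by
  have half_angle : cos ((u + π) / 2) = -sin (u / 2) := by
    rw [add_div, cos_add_pi_div_two]
  ext
  · simp only [diagonalLift]
    ring
  · simp only [diagonalLift, half_angle, cos_add_pi, mul_neg, neg_div_neg_eq]

lemma diagonalLift_add_pi_ne (u : ℝ) : diagonalLift (u + π) ≠ diagonalLift u := by
  intro h
  have h_fst : 2 * π - (u + π) = 2 * π - u := congrArg Prod.fst h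
  linarith [pi_pos]

lemma mob_diagonalLift {u : ℝ} (hu : cos u ≠ 0) :
    mob (diagonalLift u) = ![-1, tan u, tan u] := by
  have half_angle : (2 * π - u) / 2 = π - u / 2 := by ring
  have cos_double : cos u = 2 * cos (u / 2) ^ 2 - 1 := by
    rw [← cos_two_mul, mul_div_cancel₀ u two_ne_zero]
  have sin_double : sin u = 2 * sin (u / 2) * cos (u / 2) := by
    rw [← sin_two_mul, mul_div_cancel₀ u two_ne_zero]
  have signed_radius : 1 + 2 * cos (u / 2) / cos u * -cos (u / 2) = -1 / cos u := by
    field_simp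
    linarith [cos_double]
  have height : 2 * cos (u / 2) / cos u * sin (u / 2) = tan u := by
    rw [tan_eq_sin_div_cos, sin_double]
    ring
  simp only [mob, diagonalLift, half_angle, cos_pi_sub, sin_pi_sub, cos_two_pi_sub,
    sin_two_pi_sub, signed_radius, height]
  rw [div_mul_cancel₀ _ hu, div_mul_eq_mul_div, neg_mul_neg, one_mul, ← tan_eq_sin_div_cos]

lemma mob_diagonalLift_add_pi {u : ℝ} (hu : cos u ≠ 0) :
    mob (diagonalLift (u + π)) = mob (diagonalLift u) := by
  have hu_add : cos (u + π) ≠ 0 := by rwa [cos_add_pi, neg_ne_zero]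
  rw [mob_diagonalLift hu, mob_diagonalLift hu_add, tan_add_pi]

lemma continuousAt_diagonalLift {u : ℝ} (hu : cos u ≠ 0) : ContinuousAt diagonalLift u := by
  unfold diagonalLift
  fun_prop (disch := exact hu)

lemma eventually_nhdsGT_diagonalLift_mem {u₀ δ : ℝ} (hu₀ : u₀ ∈ Ico 0 (2 * π)) (hcos : cos u₀ ≠ 0)
    (hδ : |(diagonalLift u₀).2| < δ) :
    ∀ᶠ u in 𝓝[>] u₀, diagonalLift u ∈ Icc (0 : ℝ) (2 * π) ×ˢ Icc (-δ) δ := by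
  have h_snd : ∀ᶠ u in 𝓝 u₀, |(diagonalLift u).2| < δ :=
    (continuousAt_diagonalLift hcos).snd.abs.eventually_lt_const hδ
  filter_upwards [Ioo_mem_nhdsGT hu₀.2, nhdsWithin_le_nhds h_snd] with u hu huδ
  refine ⟨⟨?_, ?_⟩, abs_le.mp huδ.le⟩
  · exact sub_nonneg.mpr hu.2.le
  · exact sub_le_self _ (hu₀.1.trans hu.1.le)

lemma eventually_nhdsGT_zero_diagonalLift_mem {δ : ℝ} (hδ : 2 < δ) :
    ∀ᶠ u in 𝓝[>] 0, diagonalLift u ∈ Icc (0 : ℝ) (2 * π) ×ˢ Icc (-δ) δ :=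
  eventually_nhdsGT_diagonalLift_mem ⟨le_rfl, two_pi_pos⟩ (by simp)
    (by simpa [diagonalLift] using hδ)

lemma eventually_nhdsGT_zero_diagonalLift_add_pi_mem {δ : ℝ} (hδ : 0 < δ) :
    ∀ᶠ u in 𝓝[>] 0, diagonalLift (u + π) ∈ Icc (0 : ℝ) (2 * π) ×ˢ Icc (-δ) δ := by
  have at_pi : ∀ᶠ u in 𝓝[>] π, diagonalLift u ∈ Icc (0 : ℝ) (2 * π) ×ˢ Icc (-δ) δ :=
    eventually_nhdsGT_diagonalLift_mem ⟨pi_nonneg, by linarith [pi_pos]⟩ (by simp)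
      (by simpa [diagonalLift] using hδ)
  have shift : Tendsto (· + π) (𝓝[>] 0) (𝓝[>] π) := by
    refine tendsto_nhdsWithin_iff.mpr ⟨?_, ?_⟩
    · simpa using (tendsto_id.add_const π).mono_left (nhdsWithin_le_nhds (a := (0 : ℝ)))
    · filter_upwards [self_mem_nhdsWithin] with u hu using lt_add_of_pos_left π hu
  exact shift.eventually at_pi

theorem stmt6 :
    (∀ u : ℝ, Real.cos u ≠ 0 →
      mob (2 * π - u, 2 * Real.cos (u / 2) / Real.cos u)
          = mob (π - u, 2 * Real.sin (u / 2) / Real.cos u) ∧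
      mob (2 * π - u, 2 * Real.cos (u / 2) / Real.cos u)
          = ![-1, Real.tan u, Real.tan u]) ∧
    ∀ δ : ℝ, 2 < δ → ∃ ε > (0 : ℝ), ∀ u : ℝ, 0 < u → u < ε →
      (2 * π - u, 2 * Real.cos (u / 2) / Real.cos u)
        ∈ (Set.Icc (0 : ℝ) (2 * π)) ×ˢ (Set.Icc (-δ) δ) ∧
      (π - u, 2 * Real.sin (u / 2) / Real.cos u)
        ∈ (Set.Icc (0 : ℝ) (2 * π)) ×ˢ (Set.Icc (-δ) δ) ∧
      (2 * π - u, 2 * Real.cos (u / 2) / Real.cos u)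
        ≠ (π - u, 2 * Real.sin (u / 2) / Real.cos u) := by
  simp only [← diagonalLift_add_pi]
  refine ⟨fun u hu => ⟨(mob_diagonalLift_add_pi hu).symm, mob_diagonalLift hu⟩, fun δ hδ => ?_⟩
  have both_mem := (eventually_nhdsGT_zero_diagonalLift_mem hδ).and
    (eventually_nhdsGT_zero_diagonalLift_add_pi_mem (two_pos.trans hδ))
  obtain ⟨ε, hε, h_mem⟩ := (nhdsGT_basis (0 : ℝ)).eventually_iff.mp both_mem
  refine ⟨ε, hε, fun u hu_pos hu_lt => ?_⟩
  obtain ⟨mem, mem_add_pi⟩ := h_mem ⟨hu_pos, hu_lt⟩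
  exact ⟨mem, mem_add_pi, (diagonalLift_add_pi_ne u).symm⟩
end

section
/- Let 0 < δ < 1 and let F(x,y,z) = (−y/(x²+y²), x/(x²+y²), 0). Then the line integral of F over the boundary curve of the Möbius strip, parametrized by u ↦ r(u,δ) for u ∈ [0,4π], equals 4π; that is, ∫_0^{4π} F(r(u,δ)) · (∂r/∂u)(u,δ) du = 4π. -/
open Real Set

/-!
The field `F` is locally the gradient of the polar angle `θ` about the `z`-axis, so along a curve
that avoids the axis its line integrand is `dθ`. On the boundary of the Möbius strip the distance to
the axis is `1 + δ cos (u / 2) > 0` and the polar angle is `u` itself, so the integrand is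
constantly `1`.
-/

/-- The angular form `dθ = (-y dx + x dy) / (x² + y²)` about the `z`-axis, as a vector field.
On the axis itself its value is the junk value `0`. -/
noncomputable def angularField (q : Fin 3 → ℝ) : Fin 3 → ℝ :=
  ![-q 1 / (q 0 ^ 2 + q 1 ^ 2), q 0 / (q 0 ^ 2 + q 1 ^ 2), 0]

lemma dot3_angularField (q v : Fin 3 → ℝ) :
    dot3 (angularField q) v = (q 0 * v 1 - q 1 * v 0) / (q 0 ^ 2 + q 1 ^ 2) := by
  simp only [dot3, angularField, Matrix.cons_val]
  ring

theorem dot3_angularField_eq_deriv_angle {γ : ℝ → Fin 3 → ℝ} {ρ θ : ℝ → ℝ}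
    {γ' : Fin 3 → ℝ} {ρ' θ' u : ℝ}
    (hx : ∀ᶠ t in nhds u, γ t 0 = ρ t * cos (θ t))
    (hy : ∀ᶠ t in nhds u, γ t 1 = ρ t * sin (θ t))
    (hγ : HasDerivAt γ γ' u) (hρ : HasDerivAt ρ ρ' u) (hθ : HasDerivAt θ θ' u)
    (hρ0 : ρ u ≠ 0) :
    dot3 (angularField (γ u)) γ' = θ' := by
  have hx' : γ' 0 = ρ' * cos (θ u) + ρ u * (-sin (θ u) * θ') :=
    (hasDerivAt_pi.1 hγ 0).unique ((hρ.mul hθ.cos).congr_of_eventuallyEq hx)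
  have hy' : γ' 1 = ρ' * sin (θ u) + ρ u * (cos (θ u) * θ') :=
    (hasDerivAt_pi.1 hγ 1).unique ((hρ.mul hθ.sin).congr_of_eventuallyEq hy)
  have radius_sq : γ u 0 ^ 2 + γ u 1 ^ 2 = ρ u ^ 2 := by
    rw [hx.self_of_nhds, hy.self_of_nhds]
    linear_combination ρ u ^ 2 * sin_sq_add_cos_sq (θ u)
  have angular_momentum : γ u 0 * γ' 1 - γ u 1 * γ' 0 = θ' * ρ u ^ 2 := by
    rw [hx.self_of_nhds, hy.self_of_nhds, hx', hy']
    linear_combination θ' * ρ u ^ 2 * sin_sq_add_cos_sq (θ u)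
  rw [dot3_angularField, radius_sq, angular_momentum, mul_div_cancel_right₀ _ (pow_ne_zero 2 hρ0)]

lemma hasDerivAt_pdu {E : Type*} [NormedAddCommGroup E] [NormedSpace ℝ E]
    {f : ℝ × ℝ → E} {u v : ℝ} (hf : DifferentiableAt ℝ f (u, v)) :
    HasDerivAt (fun t => f (t, v)) (pdu f (u, v)) u :=
  hf.hasFDerivAt.comp_hasDerivAt u ((hasDerivAt_id u).prodMk (hasDerivAt_const u v))

lemma differentiable_mob : Differentiable ℝ mob := by
  refine differentiable_pi.2 fun i => ?_
  fin_cases i <;> simp only [mob, Fin.zero_eta, Fin.mk_one, Fin.reduceFinMk, Matrix.cons_val] <;>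
    fun_prop

theorem dot3_angularField_mob {u v : ℝ} (h : 1 + v * cos (u / 2) ≠ 0) :
    dot3 (angularField (mob (u, v))) (pdu mob (u, v)) = 1 := by
  have hradius : DifferentiableAt ℝ (fun t => 1 + v * cos (t / 2)) u := by fun_prop
  exact dot3_angularField_eq_deriv_angle (γ := fun t => mob (t, v))
    (.of_forall fun _ => rfl) (.of_forall fun _ => rfl)
    (hasDerivAt_pdu (differentiable_mob _)) hradius.hasDerivAt (hasDerivAt_id u) h

lemma one_add_mul_cos_pos {a : ℝ} (ha : |a| < 1) (x : ℝ) : 0 < 1 + a * cos x := by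
  have h : |a * cos x| < 1 := by
    rw [abs_mul]
    exact (mul_le_of_le_one_right (abs_nonneg a) (abs_cos_le_one x)).trans_lt ha
  linarith [neg_lt_of_abs_lt h]

theorem stmt9 (δ : ℝ) (hδ0 : 0 < δ) (hδ1 : δ < 1)
    (F : (Fin 3 → ℝ) → (Fin 3 → ℝ))
    (hF : F = fun q => ![-q 1 / (q 0 ^ 2 + q 1 ^ 2), q 0 / (q 0 ^ 2 + q 1 ^ 2), 0]) :
    (∫ u in (0 : ℝ)..(4 * π), dot3 (F (mob (u, δ))) (pdu mob (u, δ))) = 4 * π := by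
  have hδ : |δ| < 1 := by rwa [abs_of_pos hδ0]
  have integrand_eq_one (u : ℝ) : dot3 (F (mob (u, δ))) (pdu mob (u, δ)) = 1 := by
    rw [show F = angularField from hF]
    exact dot3_angularField_mob (one_add_mul_cos_pos hδ _).ne'
  simp only [integrand_eq_one, integral_one, sub_zero]
end

section
/- Let 0 < δ < 1, let F(x,y,z) = (−y/(x²+y²), x/(x²+y²), 0), and set G = F ∘ r on a neighborhood of D_δ. Then ∮_{∂D_δ} (G · r_u) du + (G · r_v) dv = 0 and ∬_{D_δ} (G_u · r_v − G_v · r_u) du dv = 0. -/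
open Real Set

/-!
In cylindrical coordinates `F` is the gradient of the polar angle, so along a surface
`r = (ρ cos θ, ρ sin θ, z)` that avoids the axis the form `G · dr` is `dθ`, where `θ` is a
single-valued function of the parameters (on the Möbius strip, `θ = u`). The boundary integral of
an exact form vanishes. By symmetry of the second derivatives of `r`,
`G_u · r_v - G_v · r_u = ∂_u (G · r_v) - ∂_v (G · r_u)`, which is `θ_vu - θ_uv = 0`.
-/

section LineIntegral

variable {P P' Q Q' φ : ℝ × ℝ → ℝ} {a b c d : ℝ}

theorem lineInt_congr (hP : EqOn P P' (uIcc a b ×ˢ uIcc c d))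
    (hQ : EqOn Q Q' (uIcc a b ×ˢ uIcc c d)) :
    lineInt P Q a b c d = lineInt P' Q' a b c d := by
  have horizontal : ∀ v ∈ uIcc c d, ∫ u in a..b, P (u, v) = ∫ u in a..b, P' (u, v) :=
    fun v hv => intervalIntegral.integral_congr fun u hu => hP ⟨hu, hv⟩
  have vertical : ∀ u ∈ uIcc a b, ∫ v in c..d, Q (u, v) = ∫ v in c..d, Q' (u, v) :=
    fun u hu => intervalIntegral.integral_congr fun v hv => hQ ⟨hu, hv⟩
  rw [lineInt, lineInt, horizontal c left_mem_uIcc, horizontal d right_mem_uIcc,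
    vertical a left_mem_uIcc, vertical b right_mem_uIcc]

theorem integral_pdu (hφ : ContDiff ℝ 1 φ) (a b v : ℝ) :
    ∫ u in a..b, pdu φ (u, v) = φ (b, v) - φ (a, v) := by
  have hderiv : ∀ u, HasDerivAt (fun t => φ (t, v)) (pdu φ (u, v)) u := fun u =>
    (hφ.differentiable one_ne_zero (u, v)).hasFDerivAt.comp_hasDerivAt u
      ((hasDerivAt_id u).prodMk (hasDerivAt_const u v))
  have hcont : Continuous fun u => pdu φ (u, v) :=
    ((hφ.continuous_fderiv one_ne_zero).clm_apply continuous_const).comp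
      (Continuous.prodMk_left v)
  exact intervalIntegral.integral_eq_sub_of_hasDerivAt (fun u _ => hderiv u)
    (hcont.intervalIntegrable a b)

theorem integral_pdv (hφ : ContDiff ℝ 1 φ) (u c d : ℝ) :
    ∫ v in c..d, pdv φ (u, v) = φ (u, d) - φ (u, c) := by
  have hderiv : ∀ v, HasDerivAt (fun t => φ (u, t)) (pdv φ (u, v)) v := fun v =>
    (hφ.differentiable one_ne_zero (u, v)).hasFDerivAt.comp_hasDerivAt v
      ((hasDerivAt_const v u).prodMk (hasDerivAt_id v))
  have hcont : Continuous fun v => pdv φ (u, v) :=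
    ((hφ.continuous_fderiv one_ne_zero).clm_apply continuous_const).comp
      (Continuous.prodMk_right u)
  exact intervalIntegral.integral_eq_sub_of_hasDerivAt (fun v _ => hderiv v)
    (hcont.intervalIntegrable c d)

theorem lineInt_pdu_pdv_eq_zero (hφ : ContDiff ℝ 1 φ) (a b c d : ℝ) :
    lineInt (pdu φ) (pdv φ) a b c d = 0 := by
  rw [lineInt, integral_pdu hφ, integral_pdu hφ, integral_pdv hφ, integral_pdv hφ]
  ring

end LineIntegral

section Pullback

variable {E : Type*} [NormedAddCommGroup E] [NormedSpace ℝ E] {p : E}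

theorem fderiv_fderiv_apply_comm {V : Type*} [NormedAddCommGroup V] [NormedSpace ℝ V]
    {f : E → V} (hf : ContDiffAt ℝ 2 f p) (w w' : E) :
    fderiv ℝ (fun q => fderiv ℝ f q w') p w = fderiv ℝ (fun q => fderiv ℝ f q w) p w' := by
  have hf' : DifferentiableAt ℝ (fderiv ℝ f) p :=
    (hf.fderiv_right (m := 1) (by norm_num)).differentiableAt one_ne_zero
  have happly : ∀ x y : E,
      fderiv ℝ (fun q => fderiv ℝ f q x) p y = fderiv ℝ (fderiv ℝ f) p y x := fun x y => by
    simp [fderiv_clm_apply hf' (differentiableAt_const x)]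
  rw [happly, happly]
  exact hf.isSymmSndFDerivAt (by simp) w w'

theorem fderiv_dot3 {G H : E → Fin 3 → ℝ} (hG : DifferentiableAt ℝ G p)
    (hH : DifferentiableAt ℝ H p) (w : E) :
    fderiv ℝ (fun q => dot3 (G q) (H q)) p w =
      dot3 (fderiv ℝ G p w) (H p) + dot3 (G p) (fderiv ℝ H p w) := by
  have hmul (i : Fin 3) :=
    (hasFDerivAt_pi'.1 hG.hasFDerivAt i).mul (hasFDerivAt_pi'.1 hH.hasFDerivAt i)
  have hdot := ((hmul 0).add (hmul 1)).add (hmul 2)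
  refine (DFunLike.congr_fun hdot.fderiv w).trans ?_
  simp only [add_apply, smul_apply, ContinuousLinearMap.comp_apply,
    ContinuousLinearMap.proj_apply, smul_eq_mul, dot3]
  ring

theorem dot3_fderiv_sub_dot3_fderiv_s11 {G r : E → Fin 3 → ℝ} (hG : DifferentiableAt ℝ G p)
    (hr : ContDiffAt ℝ 2 r p) (w w' : E) :
    dot3 (fderiv ℝ G p w) (fderiv ℝ r p w') - dot3 (fderiv ℝ G p w') (fderiv ℝ r p w) =
      fderiv ℝ (fun q => dot3 (G q) (fderiv ℝ r q w')) p w -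
        fderiv ℝ (fun q => dot3 (G q) (fderiv ℝ r q w)) p w' := by
  have hr' (x : E) : DifferentiableAt ℝ (fun q => fderiv ℝ r q x) p :=
    ((hr.fderiv_right (m := 1) (by norm_num)).differentiableAt one_ne_zero).clm_apply
      (differentiableAt_const x)
  rw [fderiv_dot3 hG (hr' w'), fderiv_dot3 hG (hr' w), fderiv_fderiv_apply_comm hr w w']
  ring

theorem dot3_fderiv_sub_dot3_fderiv_eq_zero_of_exact {G r : E → Fin 3 → ℝ} {φ : E → ℝ}
    (hG : DifferentiableAt ℝ G p) (hr : ContDiffAt ℝ 2 r p) (hφ : ContDiffAt ℝ 2 φ p)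
    (hexact : ∀ᶠ q in nhds p, ∀ w, dot3 (G q) (fderiv ℝ r q w) = fderiv ℝ φ q w) (w w' : E) :
    dot3 (fderiv ℝ G p w) (fderiv ℝ r p w') - dot3 (fderiv ℝ G p w') (fderiv ℝ r p w) = 0 := by
  have hfderiv (x : E) : fderiv ℝ (fun q => dot3 (G q) (fderiv ℝ r q x)) p =
      fderiv ℝ (fun q => fderiv ℝ φ q x) p :=
    Filter.EventuallyEq.fderiv_eq (hexact.mono fun q hq => hq x)
  rw [dot3_fderiv_sub_dot3_fderiv_s11 hG hr, hfderiv, hfderiv, fderiv_fderiv_apply_comm hφ, sub_self]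

end Pullback

section Cylindrical

/-- The map into `ℝ³` with cylindrical coordinates `(ρ, θ, z)`. The radius `ρ` may be negative and
the angle `θ` is real-valued, not taken modulo `2π`. -/
noncomputable def cylindrical {X : Type*} (ρ θ z : X → ℝ) (p : X) : Fin 3 → ℝ :=
  ![ρ p * cos (θ p), ρ p * sin (θ p), z p]

theorem angularField_cylindrical {X : Type*} (ρ θ z : X → ℝ) (p : X) :
    angularField (cylindrical ρ θ z p) = ![-sin (θ p) / ρ p, cos (θ p) / ρ p, 0] := by
  have hsq : (ρ p * cos (θ p)) ^ 2 + (ρ p * sin (θ p)) ^ 2 = ρ p * ρ p := by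
    linear_combination ρ p ^ 2 * sin_sq_add_cos_sq (θ p)
  rcases eq_or_ne (ρ p) 0 with hρ | hρ
  · simp [angularField, cylindrical, hρ]
  · simp [angularField, cylindrical, hsq, ← mul_neg, mul_div_mul_left _ _ hρ]

variable {E : Type*} [NormedAddCommGroup E] [NormedSpace ℝ E] {ρ θ z : E → ℝ} {p : E}

theorem contDiff_cylindrical {n : WithTop ℕ∞} (hρ : ContDiff ℝ n ρ) (hθ : ContDiff ℝ n θ)
    (hz : ContDiff ℝ n z) : ContDiff ℝ n (cylindrical ρ θ z) := by
  rw [contDiff_pi]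
  intro i
  fin_cases i
  · exact hρ.mul hθ.cos
  · exact hρ.mul hθ.sin
  · exact hz

theorem differentiableAt_angularField_comp_cylindrical (hρ : DifferentiableAt ℝ ρ p)
    (hθ : DifferentiableAt ℝ θ p) (hp : ρ p ≠ 0) :
    DifferentiableAt ℝ (angularField ∘ cylindrical ρ θ z) p := by
  have hcomp : angularField ∘ cylindrical ρ θ z =
      fun q => ![-sin (θ q) / ρ q, cos (θ q) / ρ q, 0] :=
    funext (angularField_cylindrical ρ θ z)
  rw [hcomp, differentiableAt_pi]
  intro i
  fin_cases i
  · exact hθ.sin.neg.mul (hρ.inv hp)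
  · exact hθ.cos.mul (hρ.inv hp)
  · exact differentiableAt_const 0

theorem fderiv_cylindrical (hρ : DifferentiableAt ℝ ρ p) (hθ : DifferentiableAt ℝ θ p)
    (hz : DifferentiableAt ℝ z p) (w : E) :
    fderiv ℝ (cylindrical ρ θ z) p w =
      ![fderiv ℝ ρ p w * cos (θ p) - ρ p * sin (θ p) * fderiv ℝ θ p w,
        fderiv ℝ ρ p w * sin (θ p) + ρ p * cos (θ p) * fderiv ℝ θ p w,
        fderiv ℝ z p w] := by
  have hcoord : ∀ i, DifferentiableAt ℝ (fun q => cylindrical ρ θ z q i) p := by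
    intro i
    fin_cases i
    · exact hρ.mul hθ.cos
    · exact hρ.mul hθ.sin
    · exact hz
  rw [fderiv_pi hcoord]
  ext i
  fin_cases i
  · simp only [cylindrical, Fin.zero_eta, ContinuousLinearMap.coe_pi', Matrix.cons_val,
      fderiv_fun_mul hρ hθ.cos, fderiv_cos hθ, add_apply, smul_apply, smul_eq_mul]
    ring
  · simp only [cylindrical, Fin.mk_one, ContinuousLinearMap.coe_pi', Matrix.cons_val,
      fderiv_fun_mul hρ hθ.sin, fderiv_sin hθ, add_apply, smul_apply, smul_eq_mul]
    ring
  · simp [cylindrical]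

theorem dot3_angularField_fderiv_cylindrical (hρ : DifferentiableAt ℝ ρ p)
    (hθ : DifferentiableAt ℝ θ p) (hz : DifferentiableAt ℝ z p) (hp : ρ p ≠ 0) (w : E) :
    dot3 (angularField (cylindrical ρ θ z p)) (fderiv ℝ (cylindrical ρ θ z) p w) =
      fderiv ℝ θ p w := by
  rw [angularField_cylindrical, fderiv_cylindrical hρ hθ hz]
  simp only [dot3, Matrix.cons_val]
  field_simp
  linear_combination ρ p * fderiv ℝ θ p w * sin_sq_add_cos_sq (θ p)

end Cylindrical

theorem stmt11_general {ρ θ z : ℝ × ℝ → ℝ} (hρ : ContDiff ℝ 2 ρ) (hθ : ContDiff ℝ 2 θ)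
    (hz : ContDiff ℝ 2 z) {a b c d : ℝ} (hne : ∀ p ∈ uIcc a b ×ˢ uIcc c d, ρ p ≠ 0)
    {r G : ℝ × ℝ → Fin 3 → ℝ} (hr : r = cylindrical ρ θ z) (hG : G = angularField ∘ r) :
    lineInt (fun p => dot3 (G p) (pdu r p)) (fun p => dot3 (G p) (pdv r p)) a b c d = 0 ∧
    (∫ p in Icc a b ×ˢ Icc c d, (dot3 (pdu G p) (pdv r p) - dot3 (pdv G p) (pdu r p))) = 0 := by
  subst hr hG
  have hρ' := hρ.differentiable two_ne_zero
  have hθ' := hθ.differentiable two_ne_zero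
  have hexact : ∀ p, ρ p ≠ 0 → ∀ w, dot3 ((angularField ∘ cylindrical ρ θ z) p)
      (fderiv ℝ (cylindrical ρ θ z) p w) = fderiv ℝ θ p w := fun p hp =>
    dot3_angularField_fderiv_cylindrical (hρ' p) (hθ' p) (hz.differentiable two_ne_zero p) hp
  constructor
  · calc
      _ = lineInt (pdu θ) (pdv θ) a b c d :=
        lineInt_congr (fun p hp => hexact p (hne p hp) _) (fun p hp => hexact p (hne p hp) _)
      _ = 0 := lineInt_pdu_pdv_eq_zero (hθ.of_le one_le_two) a b c d
  · refine MeasureTheory.setIntegral_eq_zero_of_forall_eq_zero fun p hp => ?_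
    have hρp : ρ p ≠ 0 := hne p (prod_mono Icc_subset_uIcc Icc_subset_uIcc hp)
    exact dot3_fderiv_sub_dot3_fderiv_eq_zero_of_exact
      (differentiableAt_angularField_comp_cylindrical (hρ' p) (hθ' p) hρp)
      (contDiff_cylindrical hρ hθ hz).contDiffAt hθ.contDiffAt
      ((hρ.continuous.continuousAt.eventually_ne hρp).mono hexact) _ _

theorem mob_eq_cylindrical :
    mob = cylindrical (fun p => 1 + p.2 * cos (p.1 / 2)) Prod.fst
      (fun p => p.2 * sin (p.1 / 2)) := rfl

theorem one_add_mul_cos_ne_zero {v : ℝ} (hv : |v| < 1) (x : ℝ) : 1 + v * cos x ≠ 0 := by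
  have hlt : |v * cos x| < 1 := by
    rw [abs_mul]
    exact (mul_le_of_le_one_right (abs_nonneg v) (abs_cos_le_one x)).trans_lt hv
  linarith [(abs_lt.1 hlt).1]

theorem stmt11 (δ : ℝ) (hδ0 : 0 < δ) (hδ1 : δ < 1)
    (F : (Fin 3 → ℝ) → (Fin 3 → ℝ))
    (hF : F = fun q => ![-q 1 / (q 0 ^ 2 + q 1 ^ 2), q 0 / (q 0 ^ 2 + q 1 ^ 2), 0])
    (G : ℝ × ℝ → Fin 3 → ℝ) (hG : G = F ∘ mob) :
    lineInt (fun p => dot3 (G p) (pdu mob p)) (fun p => dot3 (G p) (pdv mob p))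
        0 (2 * π) (-δ) δ = 0 ∧
    (∫ p in (Set.Icc (0 : ℝ) (2 * π)) ×ˢ (Set.Icc (-δ) δ),
        (dot3 (pdu G p) (pdv mob p) - dot3 (pdv G p) (pdu mob p))) = 0 := by
  subst hF
  refine stmt11_general (by fun_prop) contDiff_fst (by fun_prop) (fun p hp => ?_)
    mob_eq_cylindrical hG
  have hv : p.2 ∈ Icc (-δ) δ := uIcc_of_le (neg_le_self hδ0.le) ▸ hp.2
  exact one_add_mul_cos_ne_zero ((abs_le.2 hv).trans_lt hδ1) _
end

section
/- Let δ > 0. Then the image under r̂ of the boundary of the rectangle D̂ = [−π,π] × [0,1] equals the boundary curve of the Möbius strip: r̂(∂D̂) = {r(u,δ) : u ∈ [−π, 3π]}. -/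
open Real Set

/-!
On the edges `t = 0` and `t = 1` the chord map traces the boundary curve `u ↦ r(u, δ)` over
`[-π, π]` and, reflected in `π`, over `[π, 3π]`. On the edges `u = π` and `u = -π` both ends of the
chord coincide, the latter because the boundary curve closes up after `4π`; these edges collapse to
points that are already on the curve.
-/

theorem frontier_Icc_prod_Icc {α β : Type*}
    [TopologicalSpace α] [LinearOrder α] [OrderTopology α] [DenselyOrdered α]
    [NoMinOrder α] [NoMaxOrder α]
    [TopologicalSpace β] [LinearOrder β] [OrderTopology β] [DenselyOrdered β]
    [NoMinOrder β] [NoMaxOrder β]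
    {a b : α} {c d : β} (hab : a ≤ b) (hcd : c ≤ d) :
    frontier (Icc a b ×ˢ Icc c d) = Icc a b ×ˢ {c, d} ∪ {a, b} ×ˢ Icc c d := by
  rw [frontier_prod_eq, frontier_Icc hab, frontier_Icc hcd, closure_Icc, closure_Icc]

section ReflectionChord

variable {E : Type*} [AddCommGroup E] [Module ℝ E]

/-- The ruled surface swept out by the chords of a curve `γ` that join `γ u` (at `t = 0`) to `γ u'`
(at `t = 1`), where `u' = 2 * b - u` is the reflection of the parameter `u` in `b`. -/
def reflectionChord (γ : ℝ → E) (b : ℝ) (p : ℝ × ℝ) : E :=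
  AffineMap.lineMap (γ p.1) (γ (2 * b - p.1)) p.2

variable (γ : ℝ → E) {a b : ℝ}

theorem reflectionChord_center (t : ℝ) : reflectionChord γ b (b, t) = γ b := by
  simp [reflectionChord, two_mul]

theorem reflectionChord_of_closed (hclosed : γ (2 * b - a) = γ a) (t : ℝ) :
    reflectionChord γ b (a, t) = γ a := by
  simp [reflectionChord, hclosed]

theorem image_reflectionChord_prod_zero (s : Set ℝ) :
    reflectionChord γ b '' (s ×ˢ {0}) = γ '' s := by
  simp [reflectionChord, prod_singleton, image_image]

theorem image_reflectionChord_prod_one (s : Set ℝ) :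
    reflectionChord γ b '' (s ×ˢ {1}) = γ '' ((fun u => 2 * b - u) '' s) := by
  simp [reflectionChord, prod_singleton, image_image]

theorem image_reflectionChord_horizontal_edges (hab : a ≤ b) :
    reflectionChord γ b '' (Icc a b ×ˢ {0, 1}) = γ '' Icc a (2 * b - a) := by
  have hreflect : (fun u => 2 * b - u) '' Icc a b = Icc b (2 * b - a) := by
    rw [image_const_sub_Icc, two_mul, add_sub_cancel_right]
  calc reflectionChord γ b '' (Icc a b ×ˢ {0, 1})
      = γ '' Icc a b ∪ γ '' Icc b (2 * b - a) := by
        rw [insert_eq, prod_union, image_union, image_reflectionChord_prod_zero,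
          image_reflectionChord_prod_one, hreflect]
    _ = γ '' Icc a (2 * b - a) := by
        rw [← image_union, Icc_union_Icc_eq_Icc hab (by linarith)]

theorem image_reflectionChord_vertical_edges_subset (hclosed : γ (2 * b - a) = γ a) (s : Set ℝ) :
    reflectionChord γ b '' ({a, b} ×ˢ s) ⊆ γ '' {a, b} := by
  rintro _ ⟨⟨u, t⟩, ⟨rfl | rfl, -⟩, rfl⟩
  · exact ⟨u, .inl rfl, (reflectionChord_of_closed γ hclosed t).symm⟩
  · exact ⟨u, .inr rfl, (reflectionChord_center γ t).symm⟩

theorem image_reflectionChord_frontier (hab : a ≤ b) (hclosed : γ (2 * b - a) = γ a) :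
    reflectionChord γ b '' frontier (Icc a b ×ˢ Icc 0 1) = γ '' Icc a (2 * b - a) := by
  rw [frontier_Icc_prod_Icc hab zero_le_one, image_union,
    image_reflectionChord_horizontal_edges γ hab]
  have hends : {a, b} ⊆ Icc a (2 * b - a) :=
    pair_subset ⟨le_rfl, by linarith⟩ ⟨hab, by linarith⟩
  exact union_eq_left.2 <|
    (image_reflectionChord_vertical_edges_subset γ hclosed _).trans (image_mono hends)

end ReflectionChord

theorem rhat_eq_reflectionChord (δ : ℝ) :
    rhat δ = reflectionChord (fun u => mob (u, δ)) π := by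
  ext1 p
  rw [rhat, reflectionChord, AffineMap.lineMap_apply_module]

theorem mob_periodic (v : ℝ) : Function.Periodic (fun u => mob (u, v)) (4 * π) := by
  intro u
  have hhalf : (u + 4 * π) / 2 = u / 2 + 2 * π := by ring
  have hfull : u + 4 * π = u + 2 * π + 2 * π := by ring
  simp only [mob, hhalf, cos_add_two_pi, sin_add_two_pi]
  simp only [hfull, cos_add_two_pi, sin_add_two_pi]

theorem stmt14 (δ : ℝ) (hδ : 0 < δ) :
    rhat δ '' frontier ((Set.Icc (-π) π) ×ˢ (Set.Icc (0 : ℝ) 1))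
      = (fun u : ℝ => mob (u, δ)) '' Set.Icc (-π) (3 * π) := by
  have hparam : 2 * π - -π = 3 * π := by ring
  have hclosed : mob (2 * π - -π, δ) = mob (-π, δ) := by
    convert mob_periodic δ (-π) using 3
    ring
  rw [rhat_eq_reflectionChord, image_reflectionChord_frontier _ (neg_le_self pi_nonneg) hclosed,
    hparam]
end

section
/- Let 0 < δ < 1. Then the intersection of the surface Ŝ = r̂(D̂) with the z-axis consists of exactly two points: {p ∈ r̂(D̂) : p₁ = 0 and p₂ = 0} = {(0, 0, δ/√2), (0, 0, −δ/√2)}. -/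
open Real Set

/-!
Reflecting `u ↦ 2π - u` preserves the height `δ sin (u / 2)` and the factor `cos u`, and reverses
the signs of `cos (u / 2)` and `sin u`. Hence every segment of the ruled surface is horizontal, and
its first coordinate is `cos u` times a factor that stays positive because `|δ| < 1`. A segment can
therefore meet the axis only if `cos u = 0`, which forces `sin (u / 2) = ±1 / √2`; conversely, each
segment with `cos u = 0` does cross the axis, at the parameter `t = (1 + δ cos (u / 2)) / 2`.
-/

lemma mem_Icc_zero_one_iff_abs_one_sub_two_mul_le_one {R : Type*} [CommRing R] [LinearOrder R]
    [IsStrictOrderedRing R] {t : R} : t ∈ Icc (0 : R) 1 ↔ |1 - 2 * t| ≤ 1 := by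
  rw [abs_le, mem_Icc]
  constructor <;> rintro ⟨h₀, h₁⟩ <;> constructor <;> linarith

lemma abs_mul_lt_one {R : Type*} [Ring R] [LinearOrder R] [IsStrictOrderedRing R] {a b : R}
    (ha : |a| < 1) (hb : |b| ≤ 1) : |a * b| < 1 := by
  rw [abs_mul]
  exact mul_lt_one_of_nonneg_of_lt_one_left (abs_nonneg a) ha hb

lemma sin_half_eq_or_eq_neg_of_cos_eq_zero {u : ℝ} (hu : cos u = 0) :
    sin (u / 2) = 1 / √2 ∨ sin (u / 2) = -(1 / √2) := by
  rw [← sq_eq_sq_iff_eq_or_eq_neg, sin_sq_eq_half_sub, mul_div_cancel₀ u two_ne_zero, hu,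
    div_pow, sq_sqrt zero_le_two]
  norm_num

lemma sin_pi_div_two_div_two : sin (π / 2 / 2) = 1 / √2 := by
  rw [div_div, show (2 * 2 : ℝ) = 4 by norm_num, sin_pi_div_four, sqrt_div_self']

lemma mob_two_pi_sub (u v : ℝ) :
    mob (2 * π - u, v) =
      ![(1 - v * cos (u / 2)) * cos u, -((1 - v * cos (u / 2)) * sin u), v * sin (u / 2)] := by
  have half_angle : (2 * π - u) / 2 = π - u / 2 := by ring
  simp only [mob, half_angle, cos_pi_sub, sin_pi_sub, cos_two_pi_sub, sin_two_pi_sub, mul_neg,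
    ← sub_eq_add_neg]

lemma rhat_eq (δ u t : ℝ) :
    rhat δ (u, t) =
      ![cos u * (1 + δ * cos (u / 2) * (1 - 2 * t)),
        sin u * (1 - 2 * t + δ * cos (u / 2)),
        δ * sin (u / 2)] := by
  rw [rhat, mob_two_pi_sub]
  ext i
  fin_cases i <;> simp [mob] <;> ring

lemma cos_eq_zero_of_rhat_apply_zero_eq_zero {δ u t : ℝ} (hδ : |δ| < 1)
    (ht : t ∈ Icc (0 : ℝ) 1) (hx : rhat δ (u, t) 0 = 0) : cos u = 0 := by
  have h_abs : |δ * cos (u / 2) * (1 - 2 * t)| < 1 :=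
    abs_mul_lt_one (abs_mul_lt_one hδ (abs_cos_le_one _))
      (mem_Icc_zero_one_iff_abs_one_sub_two_mul_le_one.1 ht)
  have h_pos : 0 < 1 + δ * cos (u / 2) * (1 - 2 * t) := by linarith [(abs_lt.1 h_abs).1]
  rw [rhat_eq] at hx
  exact (mul_eq_zero.1 hx).resolve_right h_pos.ne'

lemma exists_rhat_eq_of_cos_eq_zero {δ u : ℝ} (hδ : |δ| ≤ 1) (hu : cos u = 0) :
    ∃ t ∈ Icc (0 : ℝ) 1, rhat δ (u, t) = ![0, 0, δ * sin (u / 2)] := by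
  have h_param : 1 - 2 * ((1 + δ * cos (u / 2)) / 2) = -(δ * cos (u / 2)) := by ring
  refine ⟨(1 + δ * cos (u / 2)) / 2, ?_, ?_⟩
  · rw [mem_Icc_zero_one_iff_abs_one_sub_two_mul_le_one, h_param, abs_neg, abs_mul]
    exact mul_le_one₀ hδ (abs_nonneg _) (abs_cos_le_one _)
  · rw [rhat_eq, h_param, hu, zero_mul, neg_add_cancel, mul_zero]

theorem stmt16_general {δ : ℝ} (hδ : |δ| < 1) {U : Set ℝ} (hU : π / 2 ∈ U)
    (hU' : -(π / 2) ∈ U) :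
    {p : Fin 3 → ℝ | p ∈ rhat δ '' (U ×ˢ Icc (0 : ℝ) 1) ∧ p 0 = 0 ∧ p 1 = 0}
      = {![0, 0, δ / √2], ![0, 0, -(δ / √2)]} := by
  ext p
  constructor
  · rintro ⟨⟨⟨u, t⟩, ⟨-, ht⟩, rfl⟩, hx, hy⟩
    have hu : cos u = 0 := cos_eq_zero_of_rhat_apply_zero_eq_zero hδ ht hx
    rw [rhat_eq] at hx hy ⊢
    simp only [Matrix.cons_val_zero, Matrix.cons_val_one] at hx hy
    rw [hx, hy]
    rcases sin_half_eq_or_eq_neg_of_cos_eq_zero hu with hs | hs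
    · left
      rw [hs, mul_one_div]
    · right
      rw [hs, mul_neg, mul_one_div, mem_singleton_iff]
  · rintro (rfl | rfl)
    · obtain ⟨t, ht, h_eq⟩ := exists_rhat_eq_of_cos_eq_zero hδ.le cos_pi_div_two
      rw [sin_pi_div_two_div_two, mul_one_div] at h_eq
      exact ⟨⟨(π / 2, t), ⟨hU, ht⟩, h_eq⟩, rfl, rfl⟩
    · obtain ⟨t, ht, h_eq⟩ := exists_rhat_eq_of_cos_eq_zero hδ.le
        ((cos_neg _).trans cos_pi_div_two)
      rw [neg_div, sin_neg, sin_pi_div_two_div_two, mul_neg, mul_one_div] at h_eq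
      exact ⟨⟨(-(π / 2), t), ⟨hU', ht⟩, h_eq⟩, rfl, rfl⟩

theorem stmt16 (δ : ℝ) (hδ0 : 0 < δ) (hδ1 : δ < 1) :
    {p : Fin 3 → ℝ |
        p ∈ rhat δ '' ((Set.Icc (-π) π) ×ˢ (Set.Icc (0 : ℝ) 1)) ∧ p 0 = 0 ∧ p 1 = 0}
      = {![0, 0, δ / Real.sqrt 2], ![0, 0, -(δ / Real.sqrt 2)]} := by
  have hπ := pi_pos
  exact stmt16_general (abs_lt.2 ⟨by linarith, hδ1⟩) ⟨by linarith, by linarith⟩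
    ⟨by linarith, by linarith⟩
end
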